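/- Let X be an undirected graph and let C_X be the category whose objects are coverings f : Y → X and whose morphisms from f : Y → X to g : Z → X are the covering morphisms h : Y → Z such that g ∘ h = f. Then C_X has all small limits and all small colimits. -/

import Mathlib

open CategoryTheory

namespace Paper

/-- An undirected graph: a set of nodes, a set of half-arcs, source and target maps
and an involution `i` on half-arcs with `s ∘ i = t`. -/
structure UGraph : Type 1 where
  nodes : Type
  half : Type
  s : half → nodes
  t : half → nodes
  inv : half → half
  inv_inv : ∀ a, inv (inv a) = a
  s_inv : ∀ a, s (inv a) = t a

/-- A morphism of undirected graphs: maps on nodes and half-arcs commuting with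
source, target and the involution. -/
@[ext]
structure UGraph.Hom (X Y : UGraph) where
  f0 : X.nodes → Y.nodes
  f1 : X.half → Y.half
  comm_s : ∀ a, Y.s (f1 a) = f0 (X.s a)
  comm_t : ∀ a, Y.t (f1 a) = f0 (X.t a)
  comm_inv : ∀ a, Y.inv (f1 a) = f1 (X.inv a)

/-- The category of undirected graphs. -/
instance : Category UGraph where
  Hom := UGraph.Hom
  id X := ⟨id, id, fun _ => rfl, fun _ => rfl, fun _ => rfl⟩
  comp f g := ⟨g.f0 ∘ f.f0, g.f1 ∘ f.f1,
    fun a => by simp [Function.comp, g.comm_s, f.comm_s],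
    fun a => by simp [Function.comp, g.comm_t, f.comm_t],
    fun a => by simp [Function.comp, g.comm_inv, f.comm_inv]⟩

@[simp] theorem UGraph.comp_f0 {X Y Z : UGraph} (f : X ⟶ Y) (g : Y ⟶ Z) :
    (f ≫ g).f0 = g.f0 ∘ f.f0 := rfl

@[simp] theorem UGraph.comp_f1 {X Y Z : UGraph} (f : X ⟶ Y) (g : Y ⟶ Z) :
    (f ≫ g).f1 = g.f1 ∘ f.f1 := rfl

/-- two nodes are adjacent if some half-arc goes from one to the other. -/
def UGraph.adj (X : UGraph) (x y : X.nodes) : Prop :=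
  ∃ u : X.half, X.s u = x ∧ X.t u = y

/-- An undirected graph is connected if any two nodes are joined by a finite
sequence of consecutively incident half-arcs. -/
def UGraph.Connected (X : UGraph) : Prop :=
  ∀ x y : X.nodes, Relation.ReflTransGen X.adj x y

/-- The undirected `p`-cycle `c^p_U` : nodes `ℤ/pℤ`, half-arcs `[n]⁺ = (n, true)`
and `[n]⁻ = (n, false)` with `s [n]⁺ = [n]`, `t [n]⁺ = [n+1]`, `i [n]⁺ = [n]⁻`. -/
def cycleU (p : ℕ) : UGraph where
  nodes := ZMod p
  half := ZMod p × Bool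
  s a := if a.2 then a.1 else a.1 + 1
  t a := if a.2 then a.1 + 1 else a.1
  inv a := (a.1, !a.2)
  inv_inv a := by simp
  s_inv a := by rcases a with ⟨n, _ | _⟩ <;> simp

/-- A `p`-cycle `h : c^p_U ⟶ X` is backtrack-free if `h₁([n+1]⁺) ≠ h₁([n]⁻)` for
all `n`. -/
def BFree {p : ℕ} {X : UGraph} (h : cycleU p ⟶ X) : Prop :=
  ∀ n : ZMod p, h.f1 (n + 1, true) ≠ h.f1 (n, false)

/-- A morphism of undirected graphs is a covering if it restricts to a bijection on
the half-arcs issued from each node. -/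
def IsCovering {X Y : UGraph} (f : X ⟶ Y) : Prop :=
  ∀ x : X.nodes,
    Function.Bijective (fun u : {u : X.half // X.s u = x} =>
      (⟨f.f1 u.1, by rw [f.comm_s, u.2]⟩ : {v : Y.half // Y.s v = f.f0 x}))

end Paper

namespace Paper

open CategoryTheory Limits

theorem IsCovering.id (X : UGraph) : IsCovering (𝟙 X) := by
  intro x
  constructor
  · intro u v huv
    exact Subtype.ext (congrArg Subtype.val huv)
  · intro v
    exact ⟨⟨v.1, v.2⟩, Subtype.ext rfl⟩

theorem IsCovering.comp {X Y Z : UGraph} {f : X ⟶ Y} {g : Y ⟶ Z}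
    (hf : IsCovering f) (hg : IsCovering g) : IsCovering (f ≫ g) := by
  intro x
  constructor
  · intro u v huv
    have h1 : g.f1 (f.f1 u.1) = g.f1 (f.f1 v.1) := congrArg Subtype.val huv
    have h2 : (⟨f.f1 u.1, by rw [f.comm_s, u.2]⟩ : {w : Y.half // Y.s w = f.f0 x}) =
        ⟨f.f1 v.1, by rw [f.comm_s, v.2]⟩ := (hg (f.f0 x)).1 (Subtype.ext h1)
    exact (hf x).1 (Subtype.ext (congrArg Subtype.val h2))
  · intro w
    obtain ⟨v, hv⟩ := (hg (f.f0 x)).2 ⟨w.1, w.2⟩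
    obtain ⟨u, hu⟩ := (hf x).2 v
    refine ⟨u, Subtype.ext ?_⟩
    show g.f1 (f.f1 u.1) = w.1
    have hu' : f.f1 u.1 = v.1 := congrArg Subtype.val hu
    have hv' : g.f1 v.1 = w.1 := congrArg Subtype.val hv
    rw [hu', hv']

/-- An object of the category `C_X` : a covering of the undirected graph `X`. -/
structure Cov (X : UGraph) : Type 1 where
  total : UGraph
  proj : total ⟶ X
  cov : IsCovering proj

/-- The category `C_X` of coverings of `X` : morphisms from `f : Y ⟶ X` to
`g : Z ⟶ X` are the covering morphisms `h : Y ⟶ Z` with `g ∘ h = f`. -/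
instance covCategory (X : UGraph) : Category (Cov X) where
  Hom A B := {h : A.total ⟶ B.total // IsCovering h ∧ h ≫ B.proj = A.proj}
  id A := ⟨𝟙 A.total, IsCovering.id _, Category.id_comp _⟩
  comp f g := ⟨f.1 ≫ g.1, f.2.1.comp g.2.1, by rw [Category.assoc, g.2.2, f.2.2]⟩
  id_comp f := Subtype.ext (Category.id_comp f.1)
  comp_id f := Subtype.ext (Category.comp_id f.1)
  assoc f g h := Subtype.ext (Category.assoc f.1 g.1 h.1)

/-!
A covering lifts each half-arc of the base uniquely from any point over its source, so the
half-arcs of `X` act on the fibres, and lifting `i(a)` undoes the action of `a`. Thus a covering is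
the same as a functor from the fundamental groupoid of `X` (paths modulo backtracking) to sets:
the half-arcs of the total space, and the effect of morphisms on them, are determined by unique
lifting. Hence `C_X` is equivalent to a category of set-valued functors, where limits and colimits
exist pointwise.
-/

section Paths

universe v u w z

/-- A natural transformation between functors on a path category, from its components and
naturality with respect to single arrows. -/
def pathsNatTransMk {V : Type u} [Quiver.{v} V] {C : Type z} [Category.{w} C]
    {F G : Paths V ⥤ C} (app : ∀ x, F.obj x ⟶ G.obj x)
    (naturality : ∀ {x y : V} (a : x ⟶ y),
      F.map ((Paths.of V).map a) ≫ app ((Paths.of V).obj y) =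
        app ((Paths.of V).obj x) ≫ G.map ((Paths.of V).map a)) : F ⟶ G where
  app := app
  naturality _ _ p := by
    induction p using Paths.induction with
    | id => simp only [CategoryTheory.Functor.map_id, Category.id_comp, Category.comp_id]
    | comp p a ih =>
      simp only [Functor.map_comp, Category.assoc]
      rw [naturality, reassoc_of% ih]

variable (V : Type u) [Quiver.{v} V] [Quiver.HasReverse V]

/-- The relation on the path category of a quiver with reversal that identifies each backtracking
path `a · reverse a` with the constant path. -/
inductive Backtrack : HomRel (Paths V)
  | intro {x y : V} (a : x ⟶ y) :
      Backtrack ((Paths.of V).map a ≫ (Paths.of V).map (Quiver.reverse a)) (𝟙 _)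

/-- The category freely generated by a quiver with reversal, subject to `reverse a` being a
right inverse of `a`. It is a groupoid, as `reverse (reverse a)` becomes equal to `a`; for the
quiver of an undirected graph it is the fundamental groupoid. -/
abbrev PathGroupoid : Type u := CategoryTheory.Quotient (Backtrack V)

namespace PathGroupoid

/-- The inclusion of the generating quiver. -/
def of : V ⥤q PathGroupoid V :=
  Paths.of V ⋙q (CategoryTheory.Quotient.functor (Backtrack V)).toPrefunctor

variable {V} {C : Type z} [Category.{w} C]

theorem of_map_comp_of_map_reverse {x y : V} (a : x ⟶ y) :
    (of V).map a ≫ (of V).map (Quiver.reverse a) = 𝟙 _ :=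
  CategoryTheory.Quotient.sound _ (Backtrack.intro a)

/-- The functor extending a prefunctor that takes reversed arrows to right inverses. -/
def lift (φ : V ⥤q C)
    (map_reverse : ∀ {x y : V} (a : x ⟶ y), φ.map a ≫ φ.map (Quiver.reverse a) = 𝟙 _) :
    PathGroupoid V ⥤ C :=
  CategoryTheory.Quotient.lift _ (Paths.lift φ) <| by
    rintro _ _ _ _ ⟨a⟩
    rw [Functor.map_comp, CategoryTheory.Functor.map_id]
    exact (congrArg₂ _ (Paths.lift_toPath φ a) (Paths.lift_toPath φ _)).trans (map_reverse a)

theorem lift_map_of_map (φ : V ⥤q C)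
    (map_reverse : ∀ {x y : V} (a : x ⟶ y), φ.map a ≫ φ.map (Quiver.reverse a) = 𝟙 _)
    {x y : V} (a : x ⟶ y) : (lift φ map_reverse).map ((of V).map a) = φ.map a :=
  Paths.lift_toPath φ a

/-- A natural transformation between functors on `PathGroupoid V`, from its components and
naturality with respect to the generating arrows. -/
def natTransMk {F G : PathGroupoid V ⥤ C}
    (app : ∀ x : V, F.obj ((of V).obj x) ⟶ G.obj ((of V).obj x))
    (naturality : ∀ {x y : V} (a : x ⟶ y),
      F.map ((of V).map a) ≫ app y = app x ≫ G.map ((of V).map a)) : F ⟶ G :=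
  CategoryTheory.Quotient.natTransLift _ (pathsNatTransMk app naturality)

end PathGroupoid

end Paths

namespace UGraph

variable (X : UGraph)

theorem t_inv (a : X.half) : X.t (X.inv a) = X.s a := by
  rw [← X.s_inv, X.inv_inv]

/-- The half-arcs of `X`, as arrows from their source to their target. -/
instance : Quiver X.nodes where
  Hom x y := {a : X.half // X.s a = x ∧ X.t a = y}

instance : Quiver.HasInvolutiveReverse X.nodes where
  reverse' a := ⟨X.inv a.1, (X.s_inv _).trans a.2.2, (X.t_inv _).trans a.2.1⟩
  inv' a := Subtype.ext (X.inv_inv a.1)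

end UGraph

section Covering

variable {X Y Z : UGraph} {f : Y ⟶ X}

theorem isCovering_iff_existsUnique :
    IsCovering f ↔
      ∀ (y : Y.nodes) (a : X.half), X.s a = f.f0 y → ∃! u, Y.s u = y ∧ f.f1 u = a := by
  simp only [IsCovering, Function.bijective_iff_existsUnique, Subtype.forall, ExistsUnique,
    Subtype.exists, Subtype.mk.injEq, exists_prop, and_assoc, and_imp]

namespace IsCovering

theorem eq_of_f1_eq (hf : IsCovering f) {u v : Y.half} (hs : Y.s u = Y.s v)
    (h : f.f1 u = f.f1 v) : u = v :=
  (isCovering_iff_existsUnique.1 hf (Y.s v) (f.f1 v) (f.comm_s v)).unique ⟨hs, h⟩ ⟨rfl, rfl⟩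

/-- The unique lift of the half-arc `a` with source `y`. -/
noncomputable def lift (hf : IsCovering f) (y : Y.nodes) (a : X.half) (h : X.s a = f.f0 y) :
    Y.half :=
  (isCovering_iff_existsUnique.1 hf y a h).choose

variable (hf : IsCovering f) {y : Y.nodes} {a : X.half} (h : X.s a = f.f0 y)

theorem s_lift : Y.s (hf.lift y a h) = y :=
  (isCovering_iff_existsUnique.1 hf y a h).choose_spec.1.1

theorem f1_lift : f.f1 (hf.lift y a h) = a :=
  (isCovering_iff_existsUnique.1 hf y a h).choose_spec.1.2

theorem eq_lift {u : Y.half} (hs : Y.s u = y) (hu : f.f1 u = a) : u = hf.lift y a h :=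
  hf.eq_of_f1_eq (hs.trans (hf.s_lift h).symm) (hu.trans (hf.f1_lift h).symm)

theorem of_comp {g : Z ⟶ Y} (hgf : IsCovering (g ≫ f)) (hf : IsCovering f) : IsCovering g := by
  refine isCovering_iff_existsUnique.2 fun z a ha => ?_
  have hfa : X.s (f.f1 a) = (g ≫ f).f0 z := (f.comm_s a).trans (congrArg f.f0 ha)
  refine ⟨hgf.lift z (f.f1 a) hfa, ⟨hgf.s_lift hfa, hf.eq_of_f1_eq ?_ (hgf.f1_lift hfa)⟩, ?_⟩
  · rw [g.comm_s, hgf.s_lift, ha]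
  · rintro u ⟨hs, hu⟩
    exact hgf.eq_lift hfa hs (congrArg f.f1 hu)

end IsCovering

end Covering

namespace Cov

variable {X : UGraph} {A B : Cov X}

theorem proj_f0_hom_f0 (h : A ⟶ B) (y : A.total.nodes) :
    B.proj.f0 (h.1.f0 y) = A.proj.f0 y :=
  congrArg (fun k => k.f0 y) h.2.2

theorem proj_f1_hom_f1 (h : A ⟶ B) (u : A.total.half) :
    B.proj.f1 (h.1.f1 u) = A.proj.f1 u :=
  congrArg (fun k => k.f1 u) h.2.2

theorem hom_ext_f0 {h k : A ⟶ B} (h0 : ∀ y, h.1.f0 y = k.1.f0 y) : h = k := by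
  refine Subtype.ext (UGraph.Hom.ext (funext h0) (funext fun u => B.cov.eq_of_f1_eq ?_ ?_))
  · rw [h.1.comm_s, k.1.comm_s, h0]
  · rw [proj_f1_hom_f1, proj_f1_hom_f1]

/-- The fibre of a covering over a node of the base. -/
abbrev Fiber (A : Cov X) (x : X.nodes) : Type := {y : A.total.nodes // A.proj.f0 y = x}

/-- Monodromy along an arrow of the base: lift the half-arc at the given point of the fibre and
take the target of the lift. -/
noncomputable def transport (A : Cov X) {x y : X.nodes} (a : x ⟶ y) (e : A.Fiber x) : A.Fiber y :=
  ⟨A.total.t (A.cov.lift e.1 a.1 (a.2.1.trans e.2.symm)), by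
    rw [← A.proj.comm_t, A.cov.f1_lift, a.2.2]⟩

theorem coe_transport_eq_t {x y : X.nodes} {a : x ⟶ y} {e : A.Fiber x} {u : A.total.half}
    (hs : A.total.s u = e.1) (hu : A.proj.f1 u = a.1) : (A.transport a e).1 = A.total.t u :=
  congrArg A.total.t (A.cov.eq_lift _ hs hu).symm

/-- The arrow of the base lying under a half-arc. -/
def projArrow (A : Cov X) (u : A.total.half) :
    A.proj.f0 (A.total.s u) ⟶ A.proj.f0 (A.total.t u) :=
  ⟨A.proj.f1 u, A.proj.comm_s u, A.proj.comm_t u⟩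

theorem transport_projArrow (u : A.total.half) :
    A.transport (A.projArrow u) ⟨A.total.s u, rfl⟩ = ⟨A.total.t u, rfl⟩ :=
  Subtype.ext (coe_transport_eq_t rfl rfl)

theorem transport_reverse_transport {x y : X.nodes} (a : x ⟶ y) (e : A.Fiber x) :
    A.transport (Quiver.reverse a) (A.transport a e) = e := by
  have hlift : X.s a.1 = A.proj.f0 e.1 := a.2.1.trans e.2.symm
  refine Subtype.ext ?_
  rw [coe_transport_eq_t (u := A.total.inv (A.cov.lift e.1 a.1 hlift)) (A.total.s_inv _),
    A.total.t_inv, A.cov.s_lift]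
  rw [← A.proj.comm_inv, A.cov.f1_lift]
  rfl

/-- The map on fibres induced by a morphism of coverings. -/
def fiberMap (h : A ⟶ B) (x : X.nodes) (e : A.Fiber x) : B.Fiber x :=
  ⟨h.1.f0 e.1, (proj_f0_hom_f0 h e.1).trans e.2⟩

theorem fiberMap_transport (h : A ⟶ B) {x y : X.nodes} (a : x ⟶ y) (e : A.Fiber x) :
    fiberMap h y (A.transport a e) = B.transport a (fiberMap h x e) := by
  have hlift : X.s a.1 = A.proj.f0 e.1 := a.2.1.trans e.2.symm
  refine Subtype.ext (Eq.symm ?_)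
  rw [coe_transport_eq_t (u := h.1.f1 (A.cov.lift e.1 a.1 hlift)), h.1.comm_t]
  · rfl
  · rw [h.1.comm_s, A.cov.s_lift]
    rfl
  · rw [proj_f1_hom_f1, A.cov.f1_lift]

/-- The action of the fundamental groupoid on the fibres of a covering. -/
noncomputable def monodromy (A : Cov X) : PathGroupoid X.nodes ⥤ Type :=
  PathGroupoid.lift { obj := A.Fiber, map := fun a => ↾(A.transport a) } fun a =>
    ConcreteCategory.hom_ext _ _ (A.transport_reverse_transport a)

theorem monodromy_map_of_map {x y : X.nodes} (a : x ⟶ y) :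
    A.monodromy.map ((PathGroupoid.of X.nodes).map a) = ↾(A.transport a) :=
  PathGroupoid.lift_map_of_map _ (fun a => ConcreteCategory.hom_ext _ _
    (A.transport_reverse_transport a)) a

variable (X) in
/-- The functor sending a covering to its monodromy action. -/
noncomputable def monodromyFunctor : Cov X ⥤ PathGroupoid X.nodes ⥤ Type where
  obj := monodromy
  map {A B} h := PathGroupoid.natTransMk (fun x => ↾(fiberMap h x)) fun a => by
    rw [monodromy_map_of_map, monodromy_map_of_map]
    exact ConcreteCategory.hom_ext _ _ (fiberMap_transport h a)

theorem monodromyFunctor_map_app_apply (h : A ⟶ B) {x : X.nodes} (e : A.Fiber x) :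
    ((monodromyFunctor X).map h).app ((PathGroupoid.of _).obj x) e = fiberMap h x e :=
  rfl

section homOfFiberMaps

variable (φ : ∀ x, A.Fiber x → B.Fiber x)

/-- The half-arc part of `homOfFiberMaps`, forced by unique lifting. -/
noncomputable def halfOfFiberMaps (u : A.total.half) : B.total.half :=
  B.cov.lift (φ _ ⟨A.total.s u, rfl⟩).1 (A.proj.f1 u)
    ((A.proj.comm_s u).trans (φ _ ⟨A.total.s u, rfl⟩).2.symm)

theorem s_halfOfFiberMaps (u : A.total.half) :
    B.total.s (halfOfFiberMaps φ u) = (φ _ ⟨A.total.s u, rfl⟩).1 :=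
  B.cov.s_lift _

theorem proj_f1_halfOfFiberMaps (u : A.total.half) :
    B.proj.f1 (halfOfFiberMaps φ u) = A.proj.f1 u :=
  B.cov.f1_lift _

variable {φ}

theorem t_halfOfFiberMaps
    (hφ : ∀ {x y : X.nodes} (a : x ⟶ y) (e : A.Fiber x),
      φ y (A.transport a e) = B.transport a (φ x e))
    (u : A.total.half) :
    B.total.t (halfOfFiberMaps φ u) = (φ _ ⟨A.total.t u, rfl⟩).1 := by
  rw [← transport_projArrow, hφ]
  rfl

variable (hφ : ∀ {x y : X.nodes} (a : x ⟶ y) (e : A.Fiber x),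
    φ y (A.transport a e) = B.transport a (φ x e))

/-- The morphism of coverings assembled from maps of fibres that commute with transport. -/
noncomputable def homOfFiberMaps : A ⟶ B :=
  let f : A.total ⟶ B.total :=
    { f0 := fun y => (φ _ ⟨y, rfl⟩).1
      f1 := halfOfFiberMaps φ
      comm_s := s_halfOfFiberMaps φ
      comm_t := t_halfOfFiberMaps hφ
      comm_inv := fun u => B.cov.eq_of_f1_eq
        (by rw [B.total.s_inv, t_halfOfFiberMaps hφ, s_halfOfFiberMaps, A.total.s_inv])
        (by rw [← B.proj.comm_inv, proj_f1_halfOfFiberMaps, proj_f1_halfOfFiberMaps,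
          A.proj.comm_inv]) }
  have comm : f ≫ B.proj = A.proj :=
    UGraph.Hom.ext (funext fun y => (φ _ ⟨y, rfl⟩).2) (funext (proj_f1_halfOfFiberMaps φ))
  ⟨f, .of_comp (comm ▸ A.cov) B.cov, comm⟩

theorem fiberMap_homOfFiberMaps {x : X.nodes} (e : A.Fiber x) :
    fiberMap (homOfFiberMaps hφ) x e = φ x e := by
  obtain ⟨y, rfl⟩ := e
  rfl

end homOfFiberMaps

instance faithful_monodromyFunctor : (monodromyFunctor X).Faithful where
  map_injective {A B h k} heq := hom_ext_f0 fun y => by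
    have hfiber : fiberMap h _ ⟨y, rfl⟩ = fiberMap k _ ⟨y, rfl⟩ := by
      rw [← monodromyFunctor_map_app_apply, heq, monodromyFunctor_map_app_apply]
    exact congrArg Subtype.val hfiber

theorem app_transport (τ : A.monodromy ⟶ B.monodromy) {x y : X.nodes} (a : x ⟶ y)
    (e : A.Fiber x) :
    τ.app ((PathGroupoid.of _).obj y) (A.transport a e) =
      B.transport a (τ.app ((PathGroupoid.of _).obj x) e) := by
  have hnat := τ.naturality ((PathGroupoid.of _).map a)
  rw [monodromy_map_of_map, monodromy_map_of_map] at hnat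
  exact ConcreteCategory.congr_hom hnat e

instance full_monodromyFunctor : (monodromyFunctor X).Full where
  map_surjective τ := ⟨homOfFiberMaps (app_transport τ), NatTrans.ext <| funext fun _ =>
    ConcreteCategory.hom_ext _ _ fun e => fiberMap_homOfFiberMaps (app_transport τ) e⟩

section ofAction

variable (F : PathGroupoid X.nodes ⥤ Type)

/-- The total space of the covering defined by a set-valued functor `F`: its nodes are pairs of a
node `x` and a point of `F x`, and the half-arc `(a, e)` runs from `e` to `F a e`. -/
def actionGraph : UGraph where
  nodes := Σ x : X.nodes, F.obj ((PathGroupoid.of _).obj x)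
  half := Σ (x y : X.nodes) (_ : x ⟶ y), F.obj ((PathGroupoid.of _).obj x)
  s := fun ⟨x, _, _, e⟩ => ⟨x, e⟩
  t := fun ⟨_, y, a, e⟩ => ⟨y, F.map ((PathGroupoid.of _).map a) e⟩
  inv := fun ⟨x, y, a, e⟩ => ⟨y, x, Quiver.reverse a, F.map ((PathGroupoid.of _).map a) e⟩
  inv_inv := fun ⟨x, y, a, e⟩ => by
    simp only [Quiver.reverse_reverse, ← ConcreteCategory.comp_apply, ← Functor.map_comp,
      PathGroupoid.of_map_comp_of_map_reverse, CategoryTheory.Functor.map_id,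
      ConcreteCategory.id_apply]
  s_inv _ := rfl

/-- The projection of `actionGraph F` to the base. -/
def actionProj : actionGraph F ⟶ X where
  f0 := Sigma.fst
  f1 u := u.2.2.1.1
  comm_s u := u.2.2.1.2.1
  comm_t u := u.2.2.1.2.2
  comm_inv _ := rfl

theorem isCovering_actionProj : IsCovering (actionProj F) := by
  rw [isCovering_iff_existsUnique]
  rintro ⟨x, e⟩ a (rfl : X.s a = x)
  refine ⟨⟨X.s a, X.t a, ⟨a, rfl, rfl⟩, e⟩, ⟨rfl, rfl⟩, ?_⟩
  rintro ⟨_, _, ⟨b, rfl, rfl⟩, e'⟩ ⟨hs, rfl : b = a⟩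
  obtain rfl : e' = e := eq_of_heq (Sigma.mk.inj hs).2
  rfl

/-- The covering of `X` whose monodromy is the set-valued functor `F`. -/
def ofAction : Cov X := ⟨actionGraph F, actionProj F, isCovering_actionProj F⟩

theorem transport_ofAction {x y : X.nodes} (a : x ⟶ y) (e : F.obj ((PathGroupoid.of _).obj x)) :
    (ofAction F).transport a ⟨⟨x, e⟩, rfl⟩ = ⟨⟨y, F.map ((PathGroupoid.of _).map a) e⟩, rfl⟩ :=
  Subtype.ext (coe_transport_eq_t (A := ofAction F) (u := ⟨x, y, a, e⟩) rfl rfl)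

/-- The fibre of `ofAction F` over a node is the value of `F` there. -/
def fiberOfActionEquiv (x : X.nodes) :
    F.obj ((PathGroupoid.of _).obj x) ≃ (ofAction F).Fiber x :=
  (Equiv.sigmaSubtype (β := fun x => F.obj ((PathGroupoid.of _).obj x)) x).symm

/-- The comparison of a set-valued functor `F` with the monodromy of the covering it defines. -/
noncomputable def toMonodromyOfAction : F ⟶ (ofAction F).monodromy :=
  PathGroupoid.natTransMk (fun x => ↾(fiberOfActionEquiv F x)) fun a => by
    rw [monodromy_map_of_map]
    exact ConcreteCategory.hom_ext _ _ fun e => (transport_ofAction F a e).symm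

instance isIso_toMonodromyOfAction : IsIso (toMonodromyOfAction F) :=
  have (x : PathGroupoid X.nodes) : IsIso ((toMonodromyOfAction F).app x) :=
    (fiberOfActionEquiv F x.as).toIso.isIso_hom
  NatIso.isIso_of_isIso_app _

end ofAction

instance essSurj_monodromyFunctor : (monodromyFunctor X).EssSurj where
  mem_essImage F := ⟨ofAction F, ⟨(asIso (toMonodromyOfAction F)).symm⟩⟩

instance isEquivalence_monodromyFunctor : (monodromyFunctor X).IsEquivalence where

end Cov

/-- the category `C_X` of coverings of an undirected graph `X` has
all small limits and all small colimits. -/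
theorem stmt_10 (X : UGraph) : HasLimits (Cov X) ∧ HasColimits (Cov X) :=
  ⟨Adjunction.has_limits_of_equivalence (Cov.monodromyFunctor X),
    Adjunction.has_colimits_of_equivalence (Cov.monodromyFunctor X)⟩

end Paper
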